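/- Let n ≥ 1, C ≥ 1, let K be a symmetric positive semidefinite real n×n matrix, λ > 0, Y ∈ ℝ^{n×C}, and A = K(K + λI_n)⁻¹. For each i, let f^{-i}(x_i) ∈ ℝ^C be the leave-one-out prediction with k-th component (k^{(i)})ᵀ(K^{(i)} + λI_{n-1})⁻¹Y^{(i)}_{•k} (submatrices obtained by deleting the i-th row/column/entry). Define Δ^λ_{ik} = (Y_{ik} − (AY)_{ik})/(1 − A_{ii}). Then for every i with A_{ii} < 1, a coordinate k maximizes the vector f^{-i}(x_i) if and only if k maximizes the vector Y_{i•} − Δ^λ_{i•}; in particular argmax_k f^{-i}_k(x_i) = (Y_{i•} − Δ^λ_{i•})*, so the leave-one-out accuracy equals (1/n) Σ_{i=1}^n 1{(Y_{i•} − Δ^λ_{i•})* = (Y_{i•})*}. -/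

import Mathlib

open Matrix Finset

/-!
Put `M = K + λI`, let `α` solve the system with the `i`-th row and column deleted, and extend it by
`α i = 0`. Then `M α` agrees with the targets `y` except in coordinate `i`, where it equals the
leave-one-out prediction `c`, so reading off coordinate `i` of `α = M⁻¹ (y + (c - y i) eᵢ)` gives
`(M⁻¹ y) i = (M⁻¹)ᵢᵢ (y i - c)`. Since `I - A = λ M⁻¹`, dividing by `1 - Aᵢᵢ = λ (M⁻¹)ᵢᵢ` solves
for `c`. The same identity with `y = 0` shows that the deleted system is nonsingular as soon as
`(M⁻¹)ᵢᵢ ≠ 0`.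
-/

section DeletedSystem

variable {ι : Type*} [Fintype ι]

theorem mulVec_extend_zero {κ m R : Type*} [Fintype κ] [NonUnitalNonAssocSemiring R]
    (M : Matrix m ι R) {e : κ → ι} (he : Function.Injective e) (w : κ → R) :
    M *ᵥ Function.extend e w 0 = M.submatrix id e *ᵥ w := by
  ext r
  refine (Fintype.sum_of_injective e he _ _ (fun j hj => ?_) fun a => ?_).symm
  · rw [Function.extend_apply' _ _ _ hj, Pi.zero_apply, mul_zero]
  · rw [he.extend_apply]
    rfl

/-- The matrix `M^{(i)}` obtained from `M` by deleting the `i`-th row and column; the remaining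
indices form the subtype `{j // j ≠ i}`. -/
abbrev deleteIndex {ι R : Type*} (M : Matrix ι ι R) (i : ι) :
    Matrix {j // j ≠ i} {j // j ≠ i} R :=
  M.submatrix Subtype.val Subtype.val

variable [DecidableEq ι]

theorem mulVec_extend_zero_of_deleteIndex_mulVec_eq {R : Type*} [NonUnitalNonAssocRing R]
    (M : Matrix ι ι R) {i : ι} {w : {j // j ≠ i} → R} {y : ι → R}
    (hw : deleteIndex M i *ᵥ w = fun b => y b.val) :
    M *ᵥ Function.extend Subtype.val w 0 =
      y + Pi.single i ((fun a : {j // j ≠ i} => M i a) ⬝ᵥ w - y i) := by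
  rw [mulVec_extend_zero M Subtype.val_injective]
  ext r
  obtain rfl | hr := eq_or_ne r i
  · rw [Pi.add_apply, Pi.single_eq_same, add_sub_cancel]
    rfl
  · rw [Pi.add_apply, Pi.single_eq_of_ne hr, add_zero]
    exact congrFun hw ⟨r, hr⟩

theorem inv_mulVec_apply_of_deleteIndex_mulVec_eq {R : Type*} [CommRing R] {M : Matrix ι ι R}
    (hM : IsUnit M) {i : ι} {w : {j // j ≠ i} → R} {y : ι → R}
    (hw : deleteIndex M i *ᵥ w = fun b => y b.val) :
    (M⁻¹ *ᵥ y) i = M⁻¹ i i * (y i - (fun a : {j // j ≠ i} => M i a) ⬝ᵥ w) := by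
  set c := (fun a : {j // j ≠ i} => M i a) ⬝ᵥ w
  have hsolution : Function.extend Subtype.val w 0 = M⁻¹ *ᵥ (y + Pi.single i (c - y i)) := by
    rw [← mulVec_extend_zero_of_deleteIndex_mulVec_eq M hw, mulVec_mulVec,
      nonsing_inv_mul _ ((isUnit_iff_isUnit_det M).1 hM), one_mulVec]
  have hextend : Function.extend Subtype.val w (0 : ι → R) i = 0 :=
    Function.extend_apply' _ _ _ fun ⟨a, ha⟩ => a.2 ha
  have hcoord : 0 = (M⁻¹ *ᵥ y) i + M⁻¹ i i * (c - y i) := by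
    rw [← hextend, hsolution, mulVec_add, Pi.add_apply, mulVec_single, Pi.smul_apply, col_apply,
      op_smul_eq_mul]
  linear_combination -hcoord

theorem isUnit_deleteIndex_of_inv_apply_self_ne_zero {F : Type*} [Field F] {M : Matrix ι ι F}
    (hM : IsUnit M) {i : ι} (hi : M⁻¹ i i ≠ 0) : IsUnit (deleteIndex M i) := by
  rw [← mulVec_injective_iff_isUnit, ← coe_mulVecLin, injective_iff_map_eq_zero]
  intro w hw
  have hw' : deleteIndex M i *ᵥ w = fun b => (0 : ι → F) b.val := hw
  have hrow : (fun a : {j // j ≠ i} => M i a) ⬝ᵥ w = 0 := by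
    simpa [hi] using inv_mulVec_apply_of_deleteIndex_mulVec_eq hM hw'
  have hextend : M *ᵥ Function.extend Subtype.val w 0 = M *ᵥ 0 := by
    simpa [hrow] using mulVec_extend_zero_of_deleteIndex_mulVec_eq M hw'
  ext a
  rw [← Subtype.val_injective.extend_apply w 0 a, mulVec_injective_of_isUnit hM hextend]
  rfl

end DeletedSystem

section Ridge

variable {ι κ R F : Type*} [Fintype ι] [DecidableEq ι] [CommRing R] [Field F]

/-- The smoother `A = K (K + λI)⁻¹` of kernel ridge regression, which maps the targets to the
in-sample predictions. -/
noncomputable def ridgeSmoother (K : Matrix ι ι R) (lam : R) : Matrix ι ι R :=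
  K * (K + lam • (1 : Matrix ι ι R))⁻¹

/-- The prediction `f^{-i}_k(x_i)` at the `i`-th point of the ridge predictor trained on the other
points. -/
noncomputable def looPrediction (K : Matrix ι ι R) (lam : R) (Y : Matrix ι κ R) (i : ι) (k : κ) :
    R :=
  (fun a : {j // j ≠ i} => K i a) ⬝ᵥ
    ((deleteIndex K i + lam • (1 : Matrix {j // j ≠ i} {j // j ≠ i} R))⁻¹ *ᵥ fun b => Y b.val k)

/-- The leave-one-out residual `Δ^λ_{ik} = (Y - A Y)_{ik} / (1 - A_{ii})`, written in terms of the
full-sample smoother `A`; it is the junk value `0` when `A_{ii} = 1`. -/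
noncomputable def looResidual (K : Matrix ι ι F) (lam : F) (Y : Matrix ι κ F) (i : ι) (k : κ) : F :=
  (Y i k - (ridgeSmoother K lam * Y) i k) / (1 - ridgeSmoother K lam i i)

theorem looPrediction_eq_sum (K : Matrix ι ι R) (lam : R) (Y : Matrix ι κ R) (i : ι) (k : κ) :
    looPrediction K lam Y i k = ∑ a : {j // j ≠ i}, ∑ b : {j // j ≠ i},
      K i a.val * (deleteIndex K i + lam • (1 : Matrix {j // j ≠ i} {j // j ≠ i} R))⁻¹ a b *
        Y b.val k := by
  simp only [looPrediction, dotProduct, mulVec, mul_sum, mul_assoc]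

theorem ridgeSmoother_eq_one_sub {K : Matrix ι ι R} {lam : R}
    (hM : IsUnit (K + lam • (1 : Matrix ι ι R))) :
    ridgeSmoother K lam = 1 - lam • (K + lam • (1 : Matrix ι ι R))⁻¹ := by
  have hinv := mul_nonsing_inv _ ((isUnit_iff_isUnit_det _).1 hM)
  rw [add_mul, smul_mul_assoc, one_mul] at hinv
  exact eq_sub_of_add_eq hinv

theorem one_sub_ridgeSmoother_apply_self {K : Matrix ι ι R} {lam : R}
    (hM : IsUnit (K + lam • (1 : Matrix ι ι R))) (i : ι) :
    1 - ridgeSmoother K lam i i = lam * (K + lam • (1 : Matrix ι ι R))⁻¹ i i := by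
  simp [ridgeSmoother_eq_one_sub hM]

theorem sub_ridgeSmoother_mul_apply {K : Matrix ι ι R} {lam : R}
    (hM : IsUnit (K + lam • (1 : Matrix ι ι R))) (Y : Matrix ι κ R) (i : ι) (k : κ) :
    Y i k - (ridgeSmoother K lam * Y) i k =
      lam * ((K + lam • (1 : Matrix ι ι R))⁻¹ *ᵥ fun j => Y j k) i := by
  rw [ridgeSmoother_eq_one_sub hM, Matrix.sub_mul, Matrix.one_mul, smul_mul, Matrix.sub_apply,
    sub_sub_cancel]
  rfl

theorem inv_mulVec_apply_eq_mul_sub_looPrediction {K : Matrix ι ι F} {lam : F}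
    (hM : IsUnit (K + lam • (1 : Matrix ι ι F))) {i : ι}
    (hi : (K + lam • (1 : Matrix ι ι F))⁻¹ i i ≠ 0) (Y : Matrix ι κ F) (k : κ) :
    ((K + lam • (1 : Matrix ι ι F))⁻¹ *ᵥ fun j => Y j k) i =
      (K + lam • (1 : Matrix ι ι F))⁻¹ i i * (Y i k - looPrediction K lam Y i k) := by
  have hdelete : deleteIndex (K + lam • (1 : Matrix ι ι F)) i = deleteIndex K i + lam • 1 := by
    rw [deleteIndex, submatrix_add, submatrix_smul, Pi.add_apply, Pi.add_apply, Pi.smul_apply,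
      Pi.smul_apply, submatrix_one _ Subtype.val_injective]
  have hrow : (fun a : {j // j ≠ i} => (K + lam • (1 : Matrix ι ι F)) i a) =
      fun a : {j // j ≠ i} => K i a := by
    ext a
    simp [one_apply_ne a.2.symm]
  have hP := isUnit_deleteIndex_of_inv_apply_self_ne_zero hM hi
  rw [looPrediction, ← hrow, ← hdelete]
  apply inv_mulVec_apply_of_deleteIndex_mulVec_eq hM
  rw [mulVec_mulVec, mul_nonsing_inv _ ((isUnit_iff_isUnit_det _).1 hP), one_mulVec]

theorem looPrediction_eq_sub_looResidual {K : Matrix ι ι F} {lam : F}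
    (hM : IsUnit (K + lam • (1 : Matrix ι ι F))) {i : ι} (hi : ridgeSmoother K lam i i ≠ 1)
    (Y : Matrix ι κ F) :
    looPrediction K lam Y i = fun k => Y i k - looResidual K lam Y i k := by
  have hdiag : lam * (K + lam • (1 : Matrix ι ι F))⁻¹ i i ≠ 0 := by
    rw [← one_sub_ridgeSmoother_apply_self hM]
    exact sub_ne_zero.2 hi.symm
  ext k
  rw [looResidual, sub_ridgeSmoother_mul_apply hM, one_sub_ridgeSmoother_apply_self hM,
    inv_mulVec_apply_eq_mul_sub_looPrediction hM (right_ne_zero_of_mul hdiag), ← mul_assoc,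
    mul_div_cancel_left₀ _ hdiag, sub_sub_cancel]

end Ridge

theorem isUnit_add_smul_one_of_posSemidef {ι F : Type*} [Fintype ι] [DecidableEq ι] [Field F]
    [PartialOrder F] [StarRing F] [StarOrderedRing F] [PosMulStrictMono F] {K : Matrix ι ι F}
    (hK : K.PosSemidef) {lam : F} (hlam : 0 < lam) : IsUnit (K + lam • (1 : Matrix ι ι F)) :=
  (PosDef.posSemidef_add hK (PosDef.one.smul hlam)).isUnit

theorem loo_accuracy_closed_form_general {ι κ L F : Type*} [Fintype ι] [DecidableEq ι]
    [DecidableEq L] [Field F] [LE F] {K : Matrix ι ι F} {lam : F}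
    (hM : IsUnit (K + lam • (1 : Matrix ι ι F))) (Y : Matrix ι κ F) (rule : (κ → F) → L) :
    (∀ i, ridgeSmoother K lam i i ≠ 1 → ∀ k,
      (∀ k', looPrediction K lam Y i k' ≤ looPrediction K lam Y i k) ↔
      (∀ k', Y i k' - looResidual K lam Y i k' ≤ Y i k - looResidual K lam Y i k)) ∧
    ((∀ i, ridgeSmoother K lam i i ≠ 1) →
      (1 / (Fintype.card ι : ℝ)) *
          ∑ i, (if rule (looPrediction K lam Y i) = rule (Y i) then (1 : ℝ) else 0) =
        (1 / (Fintype.card ι : ℝ)) *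
          ∑ i, (if rule (fun k => Y i k - looResidual K lam Y i k) = rule (Y i)
            then (1 : ℝ) else 0)) := by
  refine ⟨fun i hi k => ?_, fun hne => ?_⟩
  · rw [looPrediction_eq_sub_looResidual hM hi]
  · simp only [looPrediction_eq_sub_looResidual hM (hne _)]

/-- **Closed-form leave-one-out accuracy for kernel ridge regression.**
With smoother `A = K (K + lam I)⁻¹`, leave-one-out predictions `f i` and
residuals `Δ i k = (Y i k - (A Y) i k)/(1 - A i i)`, for every `i` with
`A i i < 1` a coordinate `k` maximizes `f i` iff it maximizes `Y i • - Δ i •`;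
hence, for any argmax-selection `star` (which picks a maximal coordinate and
depends only on the set of maximizers), the LOO accuracy equals
`(1/n) ∑ i 1{(Y i • - Δ i •)* = (Y i •)*}`. -/
theorem loo_accuracy_closed_form
    (n C : ℕ) (hn : 1 ≤ n) (hC : 1 ≤ C)
    (K : Matrix (Fin n) (Fin n) ℝ) (hK : K.PosSemidef)
    (lam : ℝ) (hlam : 0 < lam)
    (Y : Matrix (Fin n) (Fin C) ℝ)
    (A : Matrix (Fin n) (Fin n) ℝ)
    (hA : A = K * (K + lam • (1 : Matrix (Fin n) (Fin n) ℝ))⁻¹)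
    (f : Fin n → Fin C → ℝ)
    (hf : ∀ (i : Fin n) (k : Fin C),
      f i k = ∑ a : {j : Fin n // j ≠ i}, ∑ b : {j : Fin n // j ≠ i},
        K i a.val *
          ((K.submatrix (fun a : {j : Fin n // j ≠ i} => a.val)
              (fun b : {j : Fin n // j ≠ i} => b.val)
            + lam • (1 : Matrix {j : Fin n // j ≠ i} {j : Fin n // j ≠ i} ℝ))⁻¹ a b) *
          Y b.val k)
    (Δ : Fin n → Fin C → ℝ)
    (hΔ : ∀ (i : Fin n) (k : Fin C),
      Δ i k = (Y i k - (A * Y) i k) / (1 - A i i))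
    (star : (Fin C → ℝ) → Fin C)
    (hstar : ∀ (v : Fin C → ℝ) (k : Fin C), v k ≤ v (star v))
    (hstar' : ∀ v w : Fin C → ℝ,
      {k : Fin C | ∀ k' : Fin C, v k' ≤ v k} = {k : Fin C | ∀ k' : Fin C, w k' ≤ w k} →
      star v = star w) :
    (∀ i : Fin n, A i i < 1 → ∀ k : Fin C,
        (∀ k' : Fin C, f i k' ≤ f i k) ↔
        (∀ k' : Fin C, Y i k' - Δ i k' ≤ Y i k - Δ i k)) ∧
    ((∀ i : Fin n, A i i < 1) →
      (1 / (n : ℝ)) * ∑ i : Fin n, (if star (f i) = star (fun k => Y i k) then (1 : ℝ) else 0) =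
      (1 / (n : ℝ)) * ∑ i : Fin n,
        (if star (fun k => Y i k - Δ i k) = star (fun k => Y i k) then (1 : ℝ) else 0)) := by
  obtain rfl : f = looPrediction K lam Y := by ext i k; rw [hf, looPrediction_eq_sum]
  obtain rfl : Δ = looResidual K lam Y := by ext i k; rw [hΔ, hA]; rfl
  subst hA
  obtain ⟨hargmax, haccuracy⟩ :=
    loo_accuracy_closed_form_general (isUnit_add_smul_one_of_posSemidef hK hlam) Y star
  rw [Fintype.card_fin] at haccuracy
  exact ⟨fun i hi => hargmax i hi.ne, fun hlt => haccuracy fun i => (hlt i).ne⟩
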